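/- Let L be a field, σ a field automorphism of L of finite order n, and K = L^σ the subfield of elements fixed by σ. If e_1, ..., e_ν ∈ L (with 1 ≤ ν ≤ n) are linearly independent over K, then the ν×ν matrix whose (i,j) entry is σ^i(e_j) (for 0 ≤ i ≤ ν−1 and 1 ≤ j ≤ ν) has nonzero determinant. -/

import Mathlib

noncomputable section

/-- The subfield of elements fixed by a ring automorphism `σ`. -/
def RingEquiv.fixedSubfield {K : Type*} [Field K] (σ : K ≃+* K) : Subfield K where
  carrier := {a | σ a = a}
  mul_mem' := by intro a b ha hb; simp only [Set.mem_setOf_eq, map_mul] at *; rw [ha, hb]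
  one_mem' := by simp
  add_mem' := by intro a b ha hb; simp only [Set.mem_setOf_eq, map_add] at *; rw [ha, hb]
  zero_mem' := by simp
  neg_mem' := by intro a ha; simp only [Set.mem_setOf_eq, map_neg] at *; rw [ha]
  inv_mem' := by intro a ha; simp only [Set.mem_setOf_eq, map_inv₀] at *; rw [ha]

/-! Let `T` be an injective `f`-semilinear endomorphism (for the theorem, `T = f = σ`), and suppose
`∑ j, c j • T^[i] (e j) = 0` for all `i ≤ ν`, with `c 0` fixed by `f`. Subtracting the image under
`T` of the `i`-th relation from the `(i + 1)`-st one gives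
`∑ j, (c j - f (c j)) • T^[i] (T (e j)) = 0` for `i < ν`, where the term `j = 0` vanishes. By
induction on the number of vectors all `c j` are fixed by `f`, so the case `i = 0` is a relation
over the fixed subfield. A general relation with `c 0 ≠ 0` is first scaled to `c 0 = 1`. -/

section Ring

variable {R M : Type*} [Ring R] [AddCommGroup M] [Module R M] {f : R →+* R}

theorem sum_sub_map_smul_map_eq_zero {ι : Type*} (T : M →ₛₗ[f] M) {s : Finset ι} {c : ι → R}
    {v : ι → M} (h : ∑ j ∈ s, c j • v j = 0) (hT : ∑ j ∈ s, c j • T (v j) = 0) :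
    ∑ j ∈ s, (c j - f (c j)) • T (v j) = 0 := by
  have h_image : ∑ j ∈ s, f (c j) • T (v j) = 0 := by
    simpa only [map_sum, map_smulₛₗ, map_zero] using congrArg T h
  simp only [sub_smul, Finset.sum_sub_distrib, hT, h_image, sub_zero]

theorem map_eq_self_of_sum_smul_iterate_eq_zero {ν : ℕ} {T : M →ₛₗ[f] M} {e : Fin (ν + 1) → M}
    (hli : LinearIndependent R fun (j : Fin ν) (i : Fin ν) => T^[i] (T (e j.succ)))
    {c : Fin (ν + 1) → R} (hc : ∀ i : Fin (ν + 1), ∑ j, c j • T^[i] (e j) = 0)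
    (hc₀ : f (c 0) = c 0) (j : Fin (ν + 1)) : f (c j) = c j := by
  have h_diff (i : Fin ν) : ∑ j, (c j - f (c j)) • T^[i + 1] (e j) = 0 := by
    simp only [Function.iterate_succ_apply']
    refine sum_sub_map_smul_map_eq_zero T (hc i.castSucc) ?_
    simpa only [Fin.val_succ, Function.iterate_succ_apply'] using hc i.succ
  have h_tail : ∀ j : Fin ν, c j.succ - f (c j.succ) = 0 := by
    refine Fintype.linearIndependent_iff.mp hli _ (funext fun i => ?_)
    simpa [Fin.sum_univ_succ, hc₀] using h_diff i
  cases j using Fin.cases with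
  | zero => exact hc₀
  | succ j => exact (sub_eq_zero.mp (h_tail j)).symm

end Ring

section DivisionRing

variable {L V : Type*} [DivisionRing L] [AddCommGroup V] [Module L V] {f : L →+* L}

theorem linearIndependent_eqLocusField_comp {ι : Type*} {T : V →ₛₗ[f] V}
    (hT : Function.Injective T) {e : ι → V}
    (he : LinearIndependent (f.eqLocusField (.id L)) e) :
    LinearIndependent (f.eqLocusField (.id L)) (T ∘ e) :=
  he.map_of_injective_injectiveₛ id (T : V →+ V) Function.injective_id hT fun a v => by
    have ha : f a = a := a.2
    simp [Subfield.smul_def, ha]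

theorem linearIndependent_iterate {ν : ℕ} {T : V →ₛₗ[f] V} (hT : Function.Injective T)
    {e : Fin ν → V} (he : LinearIndependent (f.eqLocusField (.id L)) e) :
    LinearIndependent L fun (j : Fin ν) (i : Fin ν) => T^[i] (e j) := by
  induction ν with
  | zero => exact linearIndependent_empty_type
  | succ ν ih =>
    have h_tail : LinearIndependent L fun (j : Fin ν) (i : Fin ν) => T^[i] (T (e j.succ)) :=
      ih (linearIndependent_eqLocusField_comp hT (he.comp _ (Fin.succ_injective ν)))
    have eq_zero_of_map_eq {c : Fin (ν + 1) → L}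
        (hc : ∀ i : Fin (ν + 1), ∑ j, c j • T^[i] (e j) = 0) (hc₀ : f (c 0) = c 0)
        (j : Fin (ν + 1)) : c j = 0 := by
      have h_fixed := map_eq_self_of_sum_smul_iterate_eq_zero h_tail hc hc₀
      exact congrArg Subtype.val
        (Fintype.linearIndependent_iff.mp he (fun j => ⟨c j, h_fixed j⟩) (hc 0) j)
    rw [Fintype.linearIndependent_iff]
    intro c h_sum
    have hc (i : Fin (ν + 1)) : ∑ j, c j • T^[i] (e j) = 0 := by
      simpa only [Finset.sum_apply, Pi.smul_apply, Pi.zero_apply] using congrFun h_sum i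
    have hc₀ : c 0 = 0 := by
      by_contra h_ne
      have hc' (i : Fin (ν + 1)) : ∑ j, ((c 0)⁻¹ * c j) • T^[i] (e j) = 0 := by
        simp only [mul_smul, ← Finset.smul_sum, hc i, smul_zero]
      have h_one : (c 0)⁻¹ * c 0 = 1 := inv_mul_cancel₀ h_ne
      exact one_ne_zero (h_one.symm.trans (eq_zero_of_map_eq hc' (by rw [h_one, map_one]) 0))
    exact eq_zero_of_map_eq hc (by rw [hc₀, map_zero])

end DivisionRing

theorem det_sigma_pow_ne_zero_of_linearIndependent_general {L : Type*} [Field L] (f : L →+* L)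
    {ν : ℕ} {e : Fin ν → L} (he : LinearIndependent (f.eqLocusField (.id L)) e) :
    (Matrix.of fun i j : Fin ν => (f ^ (i : ℕ)) (e j)).det ≠ 0 := by
  have h_cols := linearIndependent_iterate (T := f.toSemilinearMap) f.injective he
  exact ((Matrix.isUnit_iff_isUnit_det _).mp
    (Matrix.linearIndependent_cols_iff_isUnit.mp h_cols)).ne_zero

/-- Let `L` be a field, `σ` an automorphism of `L` of finite order `n`, and
`K = L^σ` the fixed subfield. If `e₁, …, e_ν ∈ L` (with `1 ≤ ν ≤ n`) are linearly independent
over `K`, then the `ν × ν` matrix with `(i,j)` entry `σ^i (e_j)` (for `0 ≤ i ≤ ν-1`) has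
nonzero determinant. -/
theorem det_sigma_pow_ne_zero_of_linearIndependent
    {L : Type*} [Field L] (σ : L ≃+* L) (n : ℕ) (hn : 0 < n) (horder : orderOf σ = n)
    (ν : ℕ) (hν1 : 1 ≤ ν) (hνn : ν ≤ n)
    (e : Fin ν → L) (he : LinearIndependent (σ.fixedSubfield) e) :
    (Matrix.of fun i j : Fin ν => (σ ^ (i : ℕ)) (e j)).det ≠ 0 := by
  simpa only [RingAut.coe_pow, RingHom.coe_pow, RingHom.coe_coe] using
    det_sigma_pow_ne_zero_of_linearIndependent_general (σ : L →+* L) he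

end
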